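/- The Gaussian curvature of the dihedral Enneper surface of order n is κ(u,v) = (eg − f²)/(EG − F²) = −16n²·u^{2n−2}/(1 + u^{2n})⁴ for all u > 0 and v ∈ ℝ, where E, F, G and e, f, g are the first and second fundamental forms of σⁿ. -/

import Mathlib

noncomputable section
open MeasureTheory Real

/-- Dot product on `ℝ³ = ℝ × ℝ × ℝ`. -/
def dot3 (a b : ℝ × ℝ × ℝ) : ℝ := a.1 * b.1 + a.2.1 * b.2.1 + a.2.2 * b.2.2

/-- Euclidean norm on `ℝ³ = ℝ × ℝ × ℝ`. -/
def norm3 (a : ℝ × ℝ × ℝ) : ℝ := Real.sqrt (dot3 a a)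

/-- Partial derivative in the first (`u`) variable. -/
def pdU {E : Type*} [NormedAddCommGroup E] [NormedSpace ℝ E] (f : ℝ × ℝ → E) (p : ℝ × ℝ) : E :=
  deriv (fun x => f (x, p.2)) p.1

/-- Partial derivative in the second (`v`) variable. -/
def pdV {E : Type*} [NormedAddCommGroup E] [NormedSpace ℝ E] (f : ℝ × ℝ → E) (p : ℝ × ℝ) : E :=
  deriv (fun y => f (p.1, y)) p.2

/-- The dihedral Enneper parametrization `σⁿ` of order `n`. -/
def enneper (n : ℕ) (p : ℝ × ℝ) : ℝ × ℝ × ℝ :=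
  (p.1 * ((2 * (n : ℝ) + 1) * Real.cos p.2 - p.1 ^ (2 * n) * Real.cos ((2 * (n : ℝ) + 1) * p.2))
      / (4 * (n : ℝ) + 2),
   -(p.1 * ((2 * (n : ℝ) + 1) * Real.sin p.2 + p.1 ^ (2 * n) * Real.sin ((2 * (n : ℝ) + 1) * p.2)))
      / (4 * (n : ℝ) + 2),
   p.1 ^ (n + 1) * Real.cos (((n : ℝ) + 1) * p.2) / ((n : ℝ) + 1))

/-- The unit normal `ν` of the dihedral Enneper parametrization of order `n`. -/
def enneperNormal (n : ℕ) (p : ℝ × ℝ) : ℝ × ℝ × ℝ :=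
  (1 + p.1 ^ (2 * n))⁻¹ •
    (2 * p.1 ^ n * Real.cos ((n : ℝ) * p.2),
     2 * p.1 ^ n * Real.sin ((n : ℝ) * p.2),
     p.1 ^ (2 * n) - 1)

/-! The Enneper surface is the Weierstrass surface `X = Re ∫ (f(1 - g²)/2, i f(1 + g²)/2, fg) dz`
with data `f = 1`, `g = zⁿ`, read in polar coordinates `z = u e^{iv}`. The integrand `W` satisfies
`W · W = 0` and `W · W̄ = |f|²(1 + |g|²)²/2`, so the first fundamental form is conformal to
`du² + u² dv²` with factor `|f|²(1 + |g|²)²/4`. Moreover `W · ν = 0` and `W' · ν = -f g'`, so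
that `eg - f² = -u²|f g'|²`; hence `κ = -16 |g'|² / (|f|² (1 + |g|²)⁴)`. -/

open Complex (I normSq reCLM)
open scoped ComplexConjugate Topology

/-- Gaussian curvature at `p` of a parametrized surface `X` whose unit normal at `p` is `ν`, as the
quotient `(eg - f²)/(EG - F²)` of the determinants of the two fundamental forms. It takes the junk
value `0` where `EG = F²`. -/
def gaussCurvature (X : ℝ × ℝ → ℝ × ℝ × ℝ) (ν : ℝ × ℝ × ℝ) (p : ℝ × ℝ) : ℝ :=
  (dot3 (pdU (pdU X) p) ν * dot3 (pdV (pdV X) p) ν - dot3 (pdV (pdU X) p) ν ^ 2) /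
    (dot3 (pdU X p) (pdU X p) * dot3 (pdV X p) (pdV X p) - dot3 (pdU X p) (pdV X p) ^ 2)

theorem dot3_add_left (a b c : ℝ × ℝ × ℝ) : dot3 (a + b) c = dot3 a c + dot3 b c := by
  simp only [dot3, Prod.fst_add, Prod.snd_add]
  ring

theorem dot3_smul_right (r : ℝ) (a b : ℝ × ℝ × ℝ) : dot3 a (r • b) = r * dot3 a b := by
  simp only [dot3, Prod.smul_fst, Prod.smul_snd, smul_eq_mul]
  ring

/-- The coordinatewise real part `ℂ³ → ℝ³`. -/
def re3 : ℂ × ℂ × ℂ →L[ℝ] ℝ × ℝ × ℝ := reCLM.prodMap (reCLM.prodMap reCLM)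

theorem re3_apply (a : ℂ × ℂ × ℂ) : re3 a = (a.1.re, a.2.1.re, a.2.2.re) := rfl

/-- The complex bilinear (not sesquilinear) extension of `dot3` to `ℂ³`. -/
def cdot3 (a b : ℂ × ℂ × ℂ) : ℂ := a.1 * b.1 + a.2.1 * b.2.1 + a.2.2 * b.2.2

theorem cdot3_smul_smul (r s : ℂ) (a b : ℂ × ℂ × ℂ) :
    cdot3 (r • a) (s • b) = r * s * cdot3 a b := by
  simp only [cdot3, Prod.smul_fst, Prod.smul_snd, smul_eq_mul]
  ring

theorem dot3_re3_re3 (a b : ℂ × ℂ × ℂ) :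
    dot3 (re3 a) (re3 b) = (cdot3 a b + cdot3 a (star b)).re / 2 := by
  simp only [dot3, cdot3, re3_apply, Prod.fst_star, Prod.snd_star, Complex.star_def,
    Complex.add_re, Complex.mul_re, Complex.conj_re, Complex.conj_im]
  ring

section Polar

/-- The map `(u, v) ↦ u e^{iv}` on all of `ℝ²`. -/
def polarMap (p : ℝ × ℝ) : ℂ := p.1 * Complex.exp (p.2 * I)

theorem continuous_polarMap : Continuous polarMap := by
  unfold polarMap
  fun_prop

theorem polarMap_pow (p : ℝ × ℝ) (k : ℕ) : polarMap p ^ k = polarMap (p.1 ^ k, k * p.2) := by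
  simp only [polarMap, mul_pow, ← Complex.exp_nat_mul]
  push_cast
  ring_nf

theorem re_polarMap (p : ℝ × ℝ) : (polarMap p).re = p.1 * cos p.2 := by
  rw [polarMap, Complex.re_ofReal_mul, Complex.exp_ofReal_mul_I_re]

theorem im_polarMap (p : ℝ × ℝ) : (polarMap p).im = p.1 * sin p.2 := by
  rw [polarMap, Complex.im_ofReal_mul, Complex.exp_ofReal_mul_I_im]

theorem normSq_exp_ofReal_mul_I (t : ℝ) : normSq (Complex.exp (t * I)) = 1 := by
  rw [Complex.normSq_eq_norm_sq, Complex.norm_exp_ofReal_mul_I, one_pow]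

theorem normSq_polarMap (p : ℝ × ℝ) : normSq (polarMap p) = p.1 ^ 2 := by
  rw [polarMap, map_mul, normSq_exp_ofReal_mul_I, mul_one, Complex.normSq_ofReal, sq]

theorem hasDerivAt_exp_ofReal_mul_I (v : ℝ) :
    HasDerivAt (fun y : ℝ => Complex.exp (y * I)) (I * Complex.exp (v * I)) v := by
  simpa [mul_comm] using ((hasDerivAt_id v).ofReal_comp.mul_const I).cexp

theorem hasDerivAt_polarMap_fst (p : ℝ × ℝ) :
    HasDerivAt (fun x => polarMap (x, p.2)) (Complex.exp (p.2 * I)) p.1 := by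
  simpa [polarMap] using (hasDerivAt_id p.1).ofReal_comp.mul_const (Complex.exp (p.2 * I))

theorem hasDerivAt_polarMap_snd (p : ℝ × ℝ) :
    HasDerivAt (fun y => polarMap (p.1, y)) (I * polarMap p) p.2 :=
  ((hasDerivAt_exp_ofReal_mul_I p.2).const_mul (p.1 : ℂ)).congr_deriv (mul_left_comm _ _ _)

variable {E F : Type*} [NormedAddCommGroup E] [NormedSpace ℝ E] [NormedSpace ℂ E]
  [IsScalarTower ℝ ℂ E] [NormedAddCommGroup F] [NormedSpace ℝ F]

theorem pdU_congr {X Y : ℝ × ℝ → F} {p : ℝ × ℝ} (h : X =ᶠ[𝓝 p] Y) : pdU X p = pdU Y p :=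
  Filter.EventuallyEq.deriv_eq <|
    (Continuous.tendsto' (by fun_prop : Continuous fun x => (x, p.2)) p.1 p rfl).eventually h

theorem pdV_congr {X Y : ℝ × ℝ → F} {p : ℝ × ℝ} (h : X =ᶠ[𝓝 p] Y) : pdV X p = pdV Y p :=
  Filter.EventuallyEq.deriv_eq <|
    (Continuous.tendsto' (by fun_prop : Continuous fun y => (p.1, y)) p.2 p rfl).eventually h

variable (L : E →L[ℝ] F) {Ψ Φ : ℂ → E} {Φ' : E} {p : ℝ × ℝ}

theorem pdU_comp_polarMap (hΦ : HasDerivAt Φ Φ' (polarMap p)) :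
    pdU (fun q => L (Φ (polarMap q))) p = L (Complex.exp (p.2 * I) • Φ') :=
  (L.hasFDerivAt.comp_hasDerivAt _ (hΦ.scomp p.1 (hasDerivAt_polarMap_fst p))).deriv

theorem pdV_comp_polarMap (hΦ : HasDerivAt Φ Φ' (polarMap p)) :
    pdV (fun q => L (Φ (polarMap q))) p = L ((I * polarMap p) • Φ') :=
  (L.hasFDerivAt.comp_hasDerivAt _ (hΦ.scomp p.2 (hasDerivAt_polarMap_snd p))).deriv

theorem pdU_pdU_comp_polarMap (hΨ : ∀ᶠ z in 𝓝 (polarMap p), HasDerivAt Ψ (Φ z) z)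
    (hΦ : HasDerivAt Φ Φ' (polarMap p)) :
    pdU (pdU fun q => L (Ψ (polarMap q))) p = L (Complex.exp (p.2 * I) ^ 2 • Φ') := by
  have hU := (continuous_polarMap.tendsto p).eventually hΨ
  rw [pdU_congr (hU.mono fun q => pdU_comp_polarMap L), sq, mul_smul]
  exact pdU_comp_polarMap L (hΦ.const_smul (Complex.exp (p.2 * I)))

theorem pdV_pdU_comp_polarMap (hΨ : ∀ᶠ z in 𝓝 (polarMap p), HasDerivAt Ψ (Φ z) z)
    (hΦ : HasDerivAt Φ Φ' (polarMap p)) :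
    pdV (pdU fun q => L (Ψ (polarMap q))) p =
      L ((I * Complex.exp (p.2 * I)) • Φ (polarMap p) +
        (I * p.1 * Complex.exp (p.2 * I) ^ 2) • Φ') := by
  have hU := (continuous_polarMap.tendsto p).eventually hΨ
  rw [pdV_congr (hU.mono fun q => pdU_comp_polarMap L)]
  have hprod := (hasDerivAt_exp_ofReal_mul_I p.2).smul (hΦ.scomp p.2 (hasDerivAt_polarMap_snd p))
  refine (L.hasFDerivAt.comp_hasDerivAt _ hprod).deriv.trans (congrArg L ?_)
  simp only [Function.comp_apply, polarMap]
  module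

theorem pdV_pdV_comp_polarMap (hΨ : ∀ᶠ z in 𝓝 (polarMap p), HasDerivAt Ψ (Φ z) z)
    (hΦ : HasDerivAt Φ Φ' (polarMap p)) :
    pdV (pdV fun q => L (Ψ (polarMap q))) p =
      L (-polarMap p • Φ (polarMap p) + (-polarMap p ^ 2) • Φ') := by
  have hV := (continuous_polarMap.tendsto p).eventually hΨ
  rw [pdV_congr (hV.mono fun q => pdV_comp_polarMap L)]
  have hprod := ((hasDerivAt_id (polarMap p)).const_mul I).smul hΦ
  refine (pdV_comp_polarMap L hprod).trans (congrArg L ?_)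
  simp only [id]
  match_scalars
  · linear_combination polarMap p ^ 2 * Complex.I_sq
  · linear_combination polarMap p * Complex.I_sq

end Polar

section Weierstrass

/-- The Weierstrass integrand `(f(1 - g²)/2, i f(1 + g²)/2, fg)` of a minimal surface, as a function
of the values of the data `f` and `g` at a point. -/
def weierstrassVec (f g : ℂ) : ℂ × ℂ × ℂ := (f * (1 - g ^ 2) / 2, I * f * (1 + g ^ 2) / 2, f * g)

/-- The unit vector with stereographic projection `g` from the north pole; it is the normal
of a Weierstrass surface with Gauss map `g`. -/
def stereoNormal (g : ℂ) : ℝ × ℝ × ℝ :=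
  (1 + normSq g)⁻¹ • (2 * g.re, 2 * g.im, normSq g - 1)

theorem cdot3_weierstrassVec_self (f g : ℂ) :
    cdot3 (weierstrassVec f g) (weierstrassVec f g) = 0 := by
  simp only [cdot3, weierstrassVec]
  linear_combination f ^ 2 * (1 + g ^ 2) ^ 2 / 4 * Complex.I_sq

theorem cdot3_weierstrassVec_star (f g : ℂ) :
    cdot3 (weierstrassVec f g) (star (weierstrassVec f g)) =
      (normSq f * (1 + normSq g) ^ 2 / 2 : ℝ) := by
  simp only [cdot3, weierstrassVec, Prod.fst_star, Prod.snd_star, Complex.star_def]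
  push_cast
  simp only [← Complex.mul_conj, map_div₀, map_mul, map_sub, map_add, map_pow, map_one,
    Complex.conj_ofNat, Complex.conj_I]
  linear_combination -(f * conj f * (1 + g ^ 2) * (1 + conj g ^ 2) / 4) * Complex.I_sq

theorem dot3_re3_smul_weierstrassVec (a b f g : ℂ) :
    dot3 (re3 (a • weierstrassVec f g)) (re3 (b • weierstrassVec f g)) =
      (a * conj b).re * (normSq f * (1 + normSq g) ^ 2 / 4) := by
  rw [dot3_re3_re3, star_smul, cdot3_smul_smul, cdot3_smul_smul, cdot3_weierstrassVec_self,
    cdot3_weierstrassVec_star, mul_zero, zero_add, Complex.re_mul_ofReal, Complex.star_def]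
  ring

theorem one_add_normSq_ne_zero (g : ℂ) : 1 + normSq g ≠ 0 := by
  linarith [Complex.normSq_nonneg g]

theorem dot3_re3_stereoNormal (a : ℂ × ℂ × ℂ) (g : ℂ) :
    dot3 (re3 a) (stereoNormal g) =
      (1 + normSq g)⁻¹ * (cdot3 a (g + conj g, I * (conj g - g), g * conj g - 1)).re := by
  have him : I * (conj g - g) = (2 * g.im : ℝ) := by
    linear_combination -I * Complex.sub_conj g - (2 * g.im : ℝ) * Complex.I_sq
  have hnorm : g * conj g - 1 = (normSq g - 1 : ℝ) := by
    rw [Complex.mul_conj, Complex.ofReal_sub, Complex.ofReal_one]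
  rw [stereoNormal, dot3_smul_right, Complex.add_conj, him, hnorm]
  simp only [dot3, cdot3, re3_apply, Complex.add_re, Complex.re_mul_ofReal]

theorem dot3_re3_smul_weierstrassVec_stereoNormal (a f g : ℂ) :
    dot3 (re3 (a • weierstrassVec f g)) (stereoNormal g) = 0 := by
  have horth : cdot3 (a • weierstrassVec f g)
      (g + conj g, I * (conj g - g), g * conj g - 1) = 0 := by
    simp only [cdot3, weierstrassVec, Prod.smul_mk, smul_eq_mul]
    linear_combination a * f * (1 + g ^ 2) * (conj g - g) / 2 * Complex.I_sq
  rw [dot3_re3_stereoNormal, horth, Complex.zero_re, mul_zero]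

theorem dot3_re3_smul_stereoNormal (a g : ℂ) :
    dot3 (re3 (a • (-g, I * g, 1))) (stereoNormal g) = -a.re := by
  have hdot : cdot3 (a • (-g, I * g, 1)) (g + conj g, I * (conj g - g), g * conj g - 1) =
      (1 + normSq g : ℝ) * -a := by
    push_cast
    simp only [cdot3, Prod.smul_mk, smul_eq_mul, ← Complex.mul_conj]
    linear_combination a * g * (conj g - g) * Complex.I_sq
  rw [dot3_re3_stereoNormal, hdot, Complex.re_ofReal_mul, Complex.neg_re,
    inv_mul_cancel_left₀ (one_add_normSq_ne_zero g)]

theorem dot3_re3_smul_add_smul_stereoNormal (a c f g : ℂ) :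
    dot3 (re3 (a • (weierstrassVec f g + c • (-g, I * g, 1)))) (stereoNormal g) =
      -(a * c).re := by
  rw [smul_add, smul_smul, map_add, dot3_add_left, dot3_re3_smul_weierstrassVec_stereoNormal,
    dot3_re3_smul_stereoNormal, zero_add]

variable {f g : ℂ → ℂ} {f' g' : ℂ}

/- The derivative is split so that its first summand, being a Weierstrass vector over the same `g`,
is again orthogonal to the normal; only the second one contributes to curvature. -/
theorem hasDerivAt_weierstrassVec {z : ℂ} (hf : HasDerivAt f f' z) (hg : HasDerivAt g g' z) :
    HasDerivAt (fun w => weierstrassVec (f w) (g w))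
      (weierstrassVec f' (g z) + (f z * g') • (-g z, I * g z, 1)) z := by
  have h₁ := (hf.mul ((hg.pow 2).const_sub 1)).div_const 2
  have h₂ := ((hf.const_mul I).mul ((hg.pow 2).const_add 1)).div_const 2
  refine (h₁.prodMk (h₂.prodMk (hf.mul hg))).congr_deriv ?_
  simp only [weierstrassVec, Pi.pow_apply, Prod.smul_mk, smul_eq_mul, Prod.mk_add_mk, Prod.mk.injEq]
  refine ⟨?_, ?_, ?_⟩ <;> push_cast <;> ring

variable {Ψ : ℂ → ℂ × ℂ × ℂ} {p : ℝ × ℝ}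

theorem firstForm_det_weierstrass
    (hΨ : HasDerivAt Ψ (weierstrassVec (f (polarMap p)) (g (polarMap p))) (polarMap p)) :
    let X : ℝ × ℝ → ℝ × ℝ × ℝ := fun q => re3 (Ψ (polarMap q))
    dot3 (pdU X p) (pdU X p) * dot3 (pdV X p) (pdV X p) - dot3 (pdU X p) (pdV X p) ^ 2 =
      (p.1 * (normSq (f (polarMap p)) * (1 + normSq (g (polarMap p))) ^ 2 / 4)) ^ 2 := by
  intro X
  set ω := Complex.exp (p.2 * I)
  have hE : ω * conj ω = 1 := by
    rw [Complex.mul_conj, normSq_exp_ofReal_mul_I, Complex.ofReal_one]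
  have hF : ω * conj (I * polarMap p) = (-p.1 : ℝ) * I := by
    simp only [polarMap, map_mul, Complex.conj_I, Complex.conj_ofReal]
    push_cast
    linear_combination -(p.1 * I : ℂ) * hE
  have hG : I * polarMap p * conj (I * polarMap p) = (p.1 ^ 2 : ℝ) := by
    rw [Complex.mul_conj, map_mul, Complex.normSq_I, one_mul, normSq_polarMap]
  rw [pdU_comp_polarMap re3 hΨ, pdV_comp_polarMap re3 hΨ, dot3_re3_smul_weierstrassVec,
    dot3_re3_smul_weierstrassVec, dot3_re3_smul_weierstrassVec, hE, hF, hG, Complex.one_re,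
    Complex.ofReal_re, Complex.re_ofReal_mul, Complex.I_re]
  ring

theorem secondForm_det_weierstrass
    (hΨ : ∀ᶠ z in 𝓝 (polarMap p), HasDerivAt Ψ (weierstrassVec (f z) (g z)) z)
    (hf : HasDerivAt f f' (polarMap p)) (hg : HasDerivAt g g' (polarMap p)) :
    let X : ℝ × ℝ → ℝ × ℝ × ℝ := fun q => re3 (Ψ (polarMap q))
    let ν := stereoNormal (g (polarMap p))
    dot3 (pdU (pdU X) p) ν * dot3 (pdV (pdV X) p) ν - dot3 (pdV (pdU X) p) ν ^ 2 =
      -(p.1 ^ 2 * (normSq (f (polarMap p)) * normSq g')) := by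
  intro X ν
  set ω := Complex.exp (p.2 * I)
  set w := ω ^ 2 * (f (polarMap p) * g') with hw
  have hΦ := hasDerivAt_weierstrassVec hf hg
  have huu : dot3 (pdU (pdU X) p) ν = -w.re := by
    rw [pdU_pdU_comp_polarMap re3 hΨ hΦ, dot3_re3_smul_add_smul_stereoNormal]
  have huv : dot3 (pdV (pdU X) p) ν = p.1 * w.im := by
    rw [pdV_pdU_comp_polarMap re3 hΨ hΦ, map_add, dot3_add_left,
      dot3_re3_smul_weierstrassVec_stereoNormal, dot3_re3_smul_add_smul_stereoNormal, zero_add,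
      show I * p.1 * ω ^ 2 * (f (polarMap p) * g') = p.1 * (I * w) by ring,
      Complex.re_ofReal_mul, Complex.I_mul_re]
    ring
  have hsq : -polarMap p ^ 2 * (f (polarMap p) * g') = (-p.1 ^ 2 : ℝ) * w := by
    have hz : polarMap p ^ 2 = p.1 ^ 2 * ω ^ 2 := mul_pow _ _ 2
    push_cast
    linear_combination -(f (polarMap p) * g') * hz
  have hvv : dot3 (pdV (pdV X) p) ν = p.1 ^ 2 * w.re := by
    rw [pdV_pdV_comp_polarMap re3 hΨ hΦ, map_add, dot3_add_left,
      dot3_re3_smul_weierstrassVec_stereoNormal, dot3_re3_smul_add_smul_stereoNormal, zero_add,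
      hsq, Complex.re_ofReal_mul, neg_mul, neg_neg]
  have hnorm : normSq w = normSq (f (polarMap p)) * normSq g' := by
    rw [hw, map_mul, map_pow, normSq_exp_ofReal_mul_I, one_pow, one_mul, map_mul]
  rw [huu, huv, hvv, ← hnorm, Complex.normSq_apply]
  ring

theorem gaussCurvature_weierstrass
    (hΨ : ∀ᶠ z in 𝓝 (polarMap p), HasDerivAt Ψ (weierstrassVec (f z) (g z)) z)
    (hf : HasDerivAt f f' (polarMap p)) (hg : HasDerivAt g g' (polarMap p))
    (hf₀ : f (polarMap p) ≠ 0) (hp : p.1 ≠ 0) :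
    gaussCurvature (fun q => re3 (Ψ (polarMap q))) (stereoNormal (g (polarMap p))) p =
      -16 * normSq g' / (normSq (f (polarMap p)) * (1 + normSq (g (polarMap p))) ^ 4) := by
  have hnormf : normSq (f (polarMap p)) ≠ 0 := Complex.normSq_eq_zero.not.mpr hf₀
  have hpos := one_add_normSq_ne_zero (g (polarMap p))
  rw [gaussCurvature, firstForm_det_weierstrass hΨ.self_of_nhds,
    secondForm_det_weierstrass hΨ hf hg]
  field_simp
  ring

end Weierstrass

/-- The holomorphic curve in `ℂ³` whose real part is the Enneper surface: a primitive of the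
Weierstrass integrand with data `f = 1`, `g = zⁿ`. -/
def enneperCurve (n : ℕ) (z : ℂ) : ℂ × ℂ × ℂ :=
  ((z - z ^ (2 * n + 1) / (2 * n + 1 : ℕ)) / 2, I * (z + z ^ (2 * n + 1) / (2 * n + 1 : ℕ)) / 2,
    z ^ (n + 1) / (n + 1 : ℕ))

theorem hasDerivAt_pow_succ_div (n : ℕ) (z : ℂ) :
    HasDerivAt (fun w : ℂ => w ^ (n + 1) / (n + 1 : ℕ)) (z ^ n) z := by
  refine ((hasDerivAt_pow (n + 1) z).div_const _).congr_deriv ?_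
  rw [Nat.add_sub_cancel, mul_div_cancel_left₀ _ (Nat.cast_ne_zero.mpr n.succ_ne_zero)]

theorem hasDerivAt_enneperCurve (n : ℕ) (z : ℂ) :
    HasDerivAt (enneperCurve n) (weierstrassVec 1 (z ^ n)) z := by
  have hpow := hasDerivAt_pow_succ_div (2 * n) z
  have h₁ := ((hasDerivAt_id z).sub hpow).div_const 2
  have h₂ := (((hasDerivAt_id z).add hpow).const_mul I).div_const 2
  refine (h₁.prodMk (h₂.prodMk (hasDerivAt_pow_succ_div n z))).congr_deriv ?_
  simp only [weierstrassVec, one_mul, mul_one, pow_mul']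

theorem enneper_eq_re3_enneperCurve (n : ℕ) :
    enneper n = fun p => re3 (enneperCurve n (polarMap p)) := by
  funext p
  have hden : 4 * (n : ℝ) + 2 = 2 * (2 * n + 1) := by ring
  simp only [enneper, enneperCurve, re3_apply, hden, polarMap_pow, Complex.div_ofNat_re,
    Complex.sub_re, Complex.I_mul_re, Complex.add_im, Complex.div_natCast_re,
    Complex.div_natCast_im, re_polarMap, im_polarMap]
  push_cast
  simp only [Prod.mk.injEq, and_true]
  constructor <;> field_simp <;> ring

theorem enneperNormal_eq_stereoNormal (n : ℕ) (p : ℝ × ℝ) :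
    enneperNormal n p = stereoNormal (polarMap p ^ n) := by
  rw [enneperNormal, stereoNormal, polarMap_pow, normSq_polarMap, re_polarMap, im_polarMap,
    ← pow_mul', mul_assoc, mul_assoc]

/-- the Gaussian curvature of the dihedral Enneper surface of order
`n ≥ 1` is `κ = (eg − f²)/(EG − F²) = −16n²·u^{2n−2}/(1 + u^{2n})⁴` for all `u > 0` and
`v ∈ ℝ`, where `E, F, G` and `e, f, g` are the first and second fundamental forms. -/
theorem enneper_gaussCurvature (n : ℕ) (hn : 1 ≤ n) :
    ∀ p : ℝ × ℝ, 0 < p.1 →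
      (dot3 (pdU (pdU (enneper n)) p) (enneperNormal n p)
          * dot3 (pdV (pdV (enneper n)) p) (enneperNormal n p)
        - dot3 (pdV (pdU (enneper n)) p) (enneperNormal n p) ^ 2) /
      (dot3 (pdU (enneper n) p) (pdU (enneper n) p)
          * dot3 (pdV (enneper n) p) (pdV (enneper n) p)
        - dot3 (pdU (enneper n) p) (pdV (enneper n) p) ^ 2)
        = -16 * (n : ℝ) ^ 2 * p.1 ^ (2 * n - 2) / (1 + p.1 ^ (2 * n)) ^ 4 := by
  intro p hp
  have hcurve := gaussCurvature_weierstrass (p := p) (f := fun _ => 1) (g := fun z => z ^ n)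
    (.of_forall (hasDerivAt_enneperCurve n)) (hasDerivAt_const _ 1) (hasDerivAt_pow n _)
    one_ne_zero hp.ne'
  rw [← enneper_eq_re3_enneperCurve, ← enneperNormal_eq_stereoNormal, gaussCurvature] at hcurve
  rw [hcurve, map_mul, map_pow, map_pow, normSq_polarMap, Complex.normSq_natCast, map_one,
    ← pow_mul, ← pow_mul, Nat.mul_sub]
  ring
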